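/- arXiv:2603.01201 — 3 statements merged into one kernel-verified Lean document; each statement's English description precedes it below -/
import Mathlib

section
/- For every LTLf formula φ in negation normal form over a set of atoms P, every finite trace h ∈ (2^P)^*, and every finite, possibly empty trace τ ∈ (2^P)^*, the concatenation h·τ satisfies φ if and only if τ satisfies prog(φ, h). -/
inductive LTLf (P : Type) : Type where
  | tt : LTLf P
  | ff : LTLf P
  | atom : P → LTLf P
  | natom : P → LTLf P
  | conj : LTLf P → LTLf P → LTLf P
  | disj : LTLf P → LTLf P → LTLf P
  | next : LTLf P → LTLf P
  | wnext : LTLf P → LTLf P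
  | untl : LTLf P → LTLf P → LTLf P
  | release : LTLf P → LTLf P → LTLf P
  deriving DecidableEq

def LTLf.Sat {P : Type} : List (Set P) → LTLf P → Prop
  | _, .tt => True
  | _, .ff => False
  | [], .atom _ => False
  | w :: _, .atom p => p ∈ w
  | [], .natom _ => False
  | w :: _, .natom p => p ∉ w
  | τ, .conj φ₁ φ₂ => LTLf.Sat τ φ₁ ∧ LTLf.Sat τ φ₂
  | τ, .disj φ₁ φ₂ => LTLf.Sat τ φ₁ ∨ LTLf.Sat τ φ₂
  | [], .next _ => False
  | _ :: τ, .next φ => τ ≠ [] ∧ LTLf.Sat τ φ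
  | [], .wnext _ => True
  | _ :: τ, .wnext φ => τ = [] ∨ LTLf.Sat τ φ
  | [], .untl _ _ => False
  | w :: τ, .untl φ₁ φ₂ =>
      LTLf.Sat (w :: τ) φ₂ ∨ (LTLf.Sat (w :: τ) φ₁ ∧ LTLf.Sat τ (.untl φ₁ φ₂))
  | [], .release _ _ => True
  | w :: τ, .release φ₁ φ₂ =>
      LTLf.Sat (w :: τ) φ₂ ∧ (LTLf.Sat (w :: τ) φ₁ ∨ LTLf.Sat τ (.release φ₁ φ₂))
termination_by τ φ => (τ.length, sizeOf φ)

open Classical in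
noncomputable def LTLf.prog {P : Type} : LTLf P → Set P → LTLf P
  | .tt, _ => .tt
  | .ff, _ => .ff
  | .atom p, w => if p ∈ w then .tt else .ff
  | .natom p, w => if p ∈ w then .ff else .tt
  | .conj φ₁ φ₂, w => .conj (φ₁.prog w) (φ₂.prog w)
  | .disj φ₁ φ₂, w => .disj (φ₁.prog w) (φ₂.prog w)
  | .next φ, _ => .conj φ (.untl .tt .tt)
  | .wnext φ, _ => .disj φ (.release .ff .ff)
  | .untl φ₁ φ₂, w =>
      .disj (φ₂.prog w) (.conj (φ₁.prog w) (.conj (.untl φ₁ φ₂) (.untl .tt .tt)))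
  | .release φ₁ φ₂, w =>
      .conj (φ₂.prog w) (.disj (φ₁.prog w) (.disj (.release φ₁ φ₂) (.release .ff .ff)))

noncomputable def LTLf.progTrace {P : Type} (φ : LTLf P) (h : List (Set P)) : LTLf P :=
  h.foldl LTLf.prog φ

/-!
By iteration along `h` it suffices to treat one letter `w`, by structural induction on the formula.
There `prog` unfolds the fixed-point equations of `U` and `R`, so the only point to check is that
reading `w` may exhaust the trace. The formulas `tt U tt` and `ff R ff` express that the remaining
trace is nonempty, respectively empty: next to the residual obligation of `X` or `W` they decide
the case of the empty trace, and next to an until or a release they are redundant, since the empty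
trace already falsifies the former and satisfies the latter.
-/

namespace LTLf

variable {P : Type}

theorem sat_conj {τ : List (Set P)} {φ₁ φ₂ : LTLf P} :
    Sat τ (.conj φ₁ φ₂) ↔ Sat τ φ₁ ∧ Sat τ φ₂ := by
  simp only [Sat]

theorem sat_disj {τ : List (Set P)} {φ₁ φ₂ : LTLf P} :
    Sat τ (.disj φ₁ φ₂) ↔ Sat τ φ₁ ∨ Sat τ φ₂ := by
  simp only [Sat]

theorem not_sat_nil_untl (φ₁ φ₂ : LTLf P) : ¬ Sat [] (.untl φ₁ φ₂) := by
  simp only [Sat, not_false_eq_true]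

theorem sat_nil_release (φ₁ φ₂ : LTLf P) : Sat [] (.release φ₁ φ₂) := by
  simp only [Sat]

theorem sat_untl_tt_tt {τ : List (Set P)} : Sat τ (.untl .tt .tt) ↔ τ ≠ [] := by
  cases τ <;> simp [Sat]

theorem sat_release_ff_ff {τ : List (Set P)} : Sat τ (.release .ff .ff) ↔ τ = [] := by
  cases τ <;> simp [Sat]

theorem sat_untl_conj_untl_tt_tt {τ : List (Set P)} {φ₁ φ₂ : LTLf P} :
    Sat τ (.conj (.untl φ₁ φ₂) (.untl .tt .tt)) ↔ Sat τ (.untl φ₁ φ₂) := by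
  rw [sat_conj, sat_untl_tt_tt, and_iff_left_iff_imp]
  rintro h rfl
  exact not_sat_nil_untl φ₁ φ₂ h

theorem sat_release_disj_release_ff_ff {τ : List (Set P)} {φ₁ φ₂ : LTLf P} :
    Sat τ (.disj (.release φ₁ φ₂) (.release .ff .ff)) ↔ Sat τ (.release φ₁ φ₂) := by
  rw [sat_disj, sat_release_ff_ff, or_iff_left_iff_imp]
  rintro rfl
  exact sat_nil_release φ₁ φ₂

theorem sat_prog {φ : LTLf P} {w : Set P} {τ : List (Set P)} :
    Sat τ (φ.prog w) ↔ Sat (w :: τ) φ := by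
  induction φ with
  | tt | ff => simp only [prog, Sat]
  | atom p | natom p => by_cases hp : p ∈ w <;> simp [prog, Sat, hp]
  | conj φ₁ φ₂ ih₁ ih₂ => simp only [prog, sat_conj, ih₁, ih₂]
  | disj φ₁ φ₂ ih₁ ih₂ => simp only [prog, sat_disj, ih₁, ih₂]
  | next φ => rw [prog, sat_conj, sat_untl_tt_tt, and_comm, Sat]
  | wnext φ => rw [prog, sat_disj, sat_release_ff_ff, or_comm, Sat]
  | untl φ₁ φ₂ ih₁ ih₂ =>
    rw [prog, sat_disj, sat_conj, sat_untl_conj_untl_tt_tt, ih₁, ih₂, Sat]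
  | release φ₁ φ₂ ih₁ ih₂ =>
    rw [prog, sat_conj, sat_disj, sat_release_disj_release_ff_ff, ih₁, ih₂, Sat]

theorem progTrace_nil (φ : LTLf P) : φ.progTrace [] = φ := rfl

theorem progTrace_cons (φ : LTLf P) (w : Set P) (h : List (Set P)) :
    φ.progTrace (w :: h) = (φ.prog w).progTrace h := rfl

end LTLf

/-- For every LTLf formula φ in NNF over atoms P, every finite trace h and
every finite (possibly empty) trace τ, the concatenation h·τ satisfies φ iff τ satisfies
prog(φ, h). -/
theorem ltlf_prog_trace {P : Type} (φ : LTLf P) (h τ : List (Set P)) :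
    LTLf.Sat (h ++ τ) φ ↔ LTLf.Sat τ (φ.progTrace h) := by
  induction h generalizing φ with
  | nil => rw [List.nil_append, LTLf.progTrace_nil]
  | cons w h ih => rw [List.cons_append, LTLf.progTrace_cons, ← ih, LTLf.sat_prog]
end

section
/- Let Y and X be disjoint finite sets of agent and environment atoms, let φ be an LTLf formula over atoms Y ∪ X, and let A be a DFA over the alphabet 2^(Y∪X) with finitely many states whose accepted words are exactly the finite, possibly empty traces satisfying φ. Then there exists an agent strategy σ : (2^X)^* → 2^Y winning for φ if and only if there exists a game strategy κ that is winning in the DFA game A. -/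
/-- The joint interpretation over atoms `Y ⊕ X` determined by an agent move `m.1 ⊆ Y`
and an environment move `m.2 ⊆ X`. -/
def joint {Y X : Type} (m : Set Y × Set X) : Set (Y ⊕ X) :=
  {a | Sum.elim (· ∈ m.1) (· ∈ m.2) a}

/-- The finite trace (over `2^(Y∪X)`) formed by the first `k` joint moves of a play. -/
def jointTrace {Y X : Type} (π : ℕ → Set Y × Set X) (k : ℕ) : List (Set (Y ⊕ X)) :=
  (List.range k).map fun i => joint (π i)

/-- The finite trace corresponding to a history (finite sequence of joint moves). -/
def histTrace {Y X : Type} (h : List (Set Y × Set X)) : List (Set (Y ⊕ X)) :=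
  h.map joint

/-- A play is σ-consistent if at every instant the agent move is the one prescribed by
the strategy σ on the preceding environment moves (in particular `Y_0 = σ(ε)`). -/
def PlayConsistent {Y X : Type} (σ : List (Set X) → Set Y) (π : ℕ → Set Y × Set X) : Prop :=
  ∀ i : ℕ, (π i).1 = σ ((List.range i).map fun j => (π j).2)

/-- A history is σ-consistent if every agent move in it is prescribed by σ on the
preceding environment moves. -/
def HistConsistent {Y X : Type} (σ : List (Set X) → Set Y) (h : List (Set Y × Set X)) : Prop :=
  ∀ (i : ℕ) (hi : i < h.length), (h.get ⟨i, hi⟩).1 = σ ((h.take i).map Prod.snd)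
/-- A strategy σ is winning for the LTLf formula φ over atoms Y ∪ X if every
σ-consistent play has a finite, possibly empty, prefix satisfying φ. -/
def WinningFor {Y X : Type} (σ : List (Set X) → Set Y) (φ : LTLf (Y ⊕ X)) : Prop :=
  ∀ π : ℕ → Set Y × Set X, PlayConsistent σ π → ∃ k : ℕ, LTLf.Sat (jointTrace π k) φ

/-- A strategy σ is winning for φ assuming the history h if for every σ-consistent play τ
the concatenation h·τ has a finite, possibly empty, prefix (extending h) satisfying φ. -/
def WinningAssuming {Y X : Type} (σ : List (Set X) → Set Y) (φ : LTLf (Y ⊕ X))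
    (h : List (Set Y × Set X)) : Prop :=
  ∀ π : ℕ → Set Y × Set X, PlayConsistent σ π →
    ∃ k : ℕ, LTLf.Sat (histTrace h ++ jointTrace π k) φ

/-- A strategy σ solves incremental synthesis for (φ_org, h, φ_new) if every σ-consistent
play has a finite, possibly empty, prefix ρ such that h·ρ satisfies φ_org and ρ
satisfies φ_new. -/
def SolvesIncremental {Y X : Type} (σ : List (Set X) → Set Y) (φorg : LTLf (Y ⊕ X))
    (h : List (Set Y × Set X)) (φnew : LTLf (Y ⊕ X)) : Prop :=
  ∀ π : ℕ → Set Y × Set X, PlayConsistent σ π →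
    ∃ k : ℕ, LTLf.Sat (histTrace h ++ jointTrace π k) φorg ∧ LTLf.Sat (jointTrace π k) φnew
/-- A play is κ-consistent in the DFA game `G` if at every instant the agent move is the
one prescribed by the game strategy κ on the state that `G` reaches from its start state
on reading the joint trace so far (in particular `Y_0 = κ(ι)`). -/
def GameConsistent {Y X S : Type} (G : DFA (Set (Y ⊕ X)) S) (κ : S → Set Y)
    (π : ℕ → Set Y × Set X) : Prop :=
  ∀ i : ℕ, (π i).1 = κ (G.evalFrom G.start (jointTrace π i))

/-- A game strategy κ is winning in the DFA game `G` if every κ-consistent play has a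
finite prefix accepted by `G`. -/
def GameWinning {Y X S : Type} (G : DFA (Set (Y ⊕ X)) S) (κ : S → Set Y) : Prop :=
  ∀ π : ℕ → Set Y × Set X, GameConsistent G κ π →
    ∃ k : ℕ, G.evalFrom G.start (jointTrace π k) ∈ G.accept

/-- The fixpoint approximants of the winning region: W₀ = F and
W_{i+1} = W_i ∪ { s | ∃ Y' ⊆ Y, ∀ X' ⊆ X, δ(s, Y'∪X') ∈ W_i }. -/
def WinApprox {Y X S : Type} (G : DFA (Set (Y ⊕ X)) S) : ℕ → Set S
  | 0 => G.accept
  | i + 1 => WinApprox G i ∪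
      {s | ∃ A : Set Y, ∀ E : Set X, G.step s (joint (A, E)) ∈ WinApprox G i}

/-- The state of the DFA game `G` reached from state `s` against the environment move
sequence `e` when the agent plays according to the game strategy κ. -/
def inducedState {Y X S : Type} (G : DFA (Set (Y ⊕ X)) S) (κ : S → Set Y) :
    S → List (Set X) → S
  | s, [] => s
  | s, x :: e => inducedState G κ (G.step s (joint (κ s, x))) e

/-- The agent strategy induced by the game strategy κ on the DFA game `G`:
σ(ε) = κ(ι) and σ(X₀⋯Xₙ) = κ(δ(ι, (Y₀∪X₀)⋯(Yₙ∪Xₙ))) with the agent moves Yᵢ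
themselves determined recursively by the strategy. -/
def inducedStrategy {Y X S : Type} (G : DFA (Set (Y ⊕ X)) S) (κ : S → Set Y)
    (e : List (Set X)) : Set Y :=
  κ (inducedState G κ G.start e)

/-!
A reachability game is positionally determined, whatever the size of its arena. Let `W` be the
attractor of the accepting states: the least set of states containing them together with every
state at which some agent move leads into `W` under all environment moves. The ordinal stages of
this least fixed point rank the states of `W`, and an agent that always lowers the rank plays
positionally and reaches an accepting state, since ordinals are well-founded. From outside `W` the
environment can answer every agent move so as to stay outside, so no agent strategy wins there,
however much it remembers. Hence an arbitrary winning strategy forces the start state into `W`,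
where a positional one exists; conversely a positional strategy is simulated by tracking the state
of the automaton.
-/

universe u

theorem exists_forall_eq_apply_map_range {γ : Type*} (f : List γ → γ) :
    ∃ u : ℕ → γ, ∀ i, u i = f ((List.range i).map u) := by
  let prefixes (i : ℕ) : List γ := (fun h => h ++ [f h])^[i] []
  have map_range_eq : ∀ i, (List.range i).map (f ∘ prefixes) = prefixes i := by
    intro i
    induction i with
    | zero => rfl
    | succ i ih =>
      rw [List.range_succ, List.map_append, ih, List.map_singleton]
      exact (Function.iterate_succ_apply' (fun h => h ++ [f h]) i []).symm
  exact ⟨f ∘ prefixes, fun i => by rw [map_range_eq, Function.comp_apply]⟩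

theorem mem_lfpApprox_bot_iff {S : Type u} (f : Set S →o Set S) {o : Ordinal.{u}} {s : S} :
    s ∈ OrdinalApprox.lfpApprox f ⊥ o ↔ ∃ o' < o, s ∈ f (OrdinalApprox.lfpApprox f ⊥ o') := by
  rw [OrdinalApprox.lfpApprox]
  simp

theorem exists_rank_forall_mem_lfp {S : Type u} (f : Set S →o Set S) :
    ∃ rank : S → Ordinal.{u}, ∀ s ∈ f.lfp, s ∈ f {t ∈ f.lfp | rank t < rank s} := by
  let stage : Ordinal.{u} → Set S := OrdinalApprox.lfpApprox f ⊥
  let rank (s : S) : Ordinal.{u} := sInf {o | s ∈ stage o}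
  obtain ⟨last, stage_last⟩ : ∃ o, stage o = f.lfp := OrdinalApprox.lfp_mem_range_lfpApprox f
  have stage_subset_lfp (o : Ordinal.{u}) : stage o ⊆ f.lfp :=
    OrdinalApprox.lfpApprox_le_of_mem_fixedPoints f f.map_lfp bot_le o
  refine ⟨rank, fun s hs => ?_⟩
  have mem_stage_rank : s ∈ stage (rank s) :=
    csInf_mem (s := {o | s ∈ stage o}) ⟨last, stage_last.ge hs⟩
  obtain ⟨o, ho, hso⟩ := (mem_lfpApprox_bot_iff f).1 mem_stage_rank
  have stage_subset : stage o ⊆ {t ∈ f.lfp | rank t < rank s} :=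
    fun t ht => ⟨stage_subset_lfp o ht, (csInf_le' (s := {o | t ∈ stage o}) ht).trans_lt ho⟩
  exact f.monotone stage_subset hso

section Reachability

variable {S α β : Type*} (step : S → α → β → S) (goal : Set S)

/-- The operator whose least fixed point is the attractor: in the turn-based game where the agent
picks `a`, the environment answers with `b` and the state `s` becomes `step s a b`, it sends `W` to
the goal states and the states from which the agent can force the next state to be in `W`. -/
def attractorStep : Set S →o Set S where
  toFun W := goal ∪ {s | ∃ a, ∀ b, step s a b ∈ W}
  monotone' _ _ hVW :=
    Set.union_subset_union_right goal fun _ ⟨a, ha⟩ => ⟨a, fun b => hVW (ha b)⟩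

/-- The attractor of `goal`, i.e. the agent's winning region in the reachability game. A least
fixed point replaces the finite stages `WinApprox`, whose union can be too small when `S`
and `β` are infinite. -/
def attractor : Set S :=
  (attractorStep step goal).lfp

theorem attractorStep_attractor :
    attractorStep step goal (attractor step goal) = attractor step goal :=
  (attractorStep step goal).map_lfp

theorem goal_subset_attractor : goal ⊆ attractor step goal := by
  rw [← attractorStep_attractor]
  exact Set.subset_union_left

variable {step goal}

theorem exists_step_notMem_attractor {s : S} (hs : s ∉ attractor step goal) (a : α) :
    ∃ b, step s a b ∉ attractor step goal := by
  contrapose! hs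
  rw [← attractorStep_attractor]
  exact Or.inr ⟨a, hs⟩

variable (step goal)

theorem exists_positional_forall_run_exists_mem_goal [Nonempty α] :
    ∃ κ : S → α, ∀ run : ℕ → S, run 0 ∈ attractor step goal →
      (∀ i, ∃ b, run (i + 1) = step (run i) (κ (run i)) b) → ∃ k, run k ∈ goal := by
  obtain ⟨rank, hrank⟩ := exists_rank_forall_mem_lfp (attractorStep step goal)
  have exists_move : ∀ s ∈ attractor step goal, s ∉ goal →
      ∃ a, ∀ b, step s a b ∈ attractor step goal ∧ rank (step s a b) < rank s :=
    fun s hs hgoal => (hrank s hs).resolve_left hgoal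
  choose! κ hκ using exists_move
  refine ⟨κ, fun run hstart hrun => ?_⟩
  by_contra! avoid
  have mem_attractor : ∀ i, run i ∈ attractor step goal := by
    intro i
    induction i with
    | zero => exact hstart
    | succ i ih =>
      obtain ⟨b, hb⟩ := hrun i
      exact hb ▸ (hκ _ ih (avoid i) b).1
  have rank_strictAnti : StrictAnti (rank ∘ run) := by
    refine strictAnti_nat_of_succ_lt fun i => ?_
    obtain ⟨b, hb⟩ := hrun i
    simpa only [Function.comp_apply, hb] using (hκ _ (mem_attractor i) (avoid i) b).2
  exact not_strictAnti_of_wellFoundedLT _ rank_strictAnti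

end Reachability

section DFAGame

variable {Y X S : Type}

/-- One round of the DFA game `G` from the state `s`, with agent move `B` and environment
move `E`. -/
def gameStep (G : DFA (Set (Y ⊕ X)) S) (s : S) (B : Set Y) (E : Set X) : S :=
  G.step s (joint (B, E))

theorem evalFrom_jointTrace_succ (G : DFA (Set (Y ⊕ X)) S) (s : S) (π : ℕ → Set Y × Set X)
    (k : ℕ) :
    G.evalFrom s (jointTrace π (k + 1)) =
      gameStep G (G.evalFrom s (jointTrace π k)) (π k).1 (π k).2 := by
  rw [jointTrace, List.range_succ, List.map_append, List.map_singleton,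
    DFA.evalFrom_append_singleton]
  rfl

theorem inducedState_append_singleton (G : DFA (Set (Y ⊕ X)) S) (κ : S → Set Y) (s : S)
    (e : List (Set X)) (E : Set X) :
    inducedState G κ s (e ++ [E]) =
      gameStep G (inducedState G κ s e) (κ (inducedState G κ s e)) E := by
  induction e generalizing s with
  | nil => rfl
  | cons _ _ ih => exact ih _

namespace PlayConsistent

variable {G : DFA (Set (Y ⊕ X)) S} {κ : S → Set Y} {π : ℕ → Set Y × Set X}

theorem inducedState_eq_evalFrom (hπ : PlayConsistent (inducedStrategy G κ) π) (i : ℕ) :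
    inducedState G κ G.start ((List.range i).map fun j => (π j).2) =
      G.evalFrom G.start (jointTrace π i) := by
  induction i with
  | zero => rfl
  | succ i ih =>
    have move_eq : κ (G.evalFrom G.start (jointTrace π i)) = (π i).1 := by
      rw [hπ i, inducedStrategy, ih]
    rw [evalFrom_jointTrace_succ, List.range_succ, List.map_append, List.map_singleton,
      inducedState_append_singleton, ih, move_eq]

theorem gameConsistent (hπ : PlayConsistent (inducedStrategy G κ) π) : GameConsistent G κ π :=
  fun i => by rw [hπ i, inducedStrategy, hπ.inducedState_eq_evalFrom]

end PlayConsistent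

theorem exists_playConsistent_with_response (σ : List (Set X) → Set Y)
    (ρ : List (Set (Y ⊕ X)) → Set Y → Set X) :
    ∃ π : ℕ → Set Y × Set X, PlayConsistent σ π ∧ ∀ i, (π i).2 = ρ (jointTrace π i) (π i).1 := by
  obtain ⟨π, hπ⟩ := exists_forall_eq_apply_map_range fun h : List (Set Y × Set X) =>
    (σ (h.map Prod.snd), ρ (histTrace h) (σ (h.map Prod.snd)))
  simp only [histTrace, List.map_map] at hπ
  have agent_move : PlayConsistent σ π := fun i => congrArg Prod.fst (hπ i)
  refine ⟨π, agent_move, fun i => ?_⟩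
  rw [agent_move i]
  exact congrArg Prod.snd (hπ i)

variable {G : DFA (Set (Y ⊕ X)) S}

theorem exists_playConsistent_forall_notMem_accept
    (hstart : G.start ∉ attractor (gameStep G) G.accept) (σ : List (Set X) → Set Y) :
    ∃ π : ℕ → Set Y × Set X, PlayConsistent σ π ∧
      ∀ k, G.evalFrom G.start (jointTrace π k) ∉ G.accept := by
  have exists_response : ∀ s ∉ attractor (gameStep G) G.accept, ∀ B,
      ∃ E, gameStep G s B E ∉ attractor (gameStep G) G.accept :=
    fun _ => exists_step_notMem_attractor
  choose! ρ hρ using exists_response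
  obtain ⟨π, hπσ, hπρ⟩ :=
    exists_playConsistent_with_response σ fun τ => ρ (G.evalFrom G.start τ)
  have notMem_attractor : ∀ k,
      G.evalFrom G.start (jointTrace π k) ∉ attractor (gameStep G) G.accept := by
    intro k
    induction k with
    | zero => exact hstart
    | succ k ih =>
      rw [evalFrom_jointTrace_succ, hπρ k]
      exact hρ _ ih _
  exact ⟨π, hπσ, fun k hk => notMem_attractor k (goal_subset_attractor _ _ hk)⟩

theorem exists_gameWinning_of_start_mem_attractor
    (hstart : G.start ∈ attractor (gameStep G) G.accept) : ∃ κ : S → Set Y, GameWinning G κ := by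
  obtain ⟨κ, hκ⟩ := exists_positional_forall_run_exists_mem_goal (gameStep G) G.accept
  refine ⟨κ, fun π hπ => hκ (fun i => G.evalFrom G.start (jointTrace π i)) hstart fun i => ?_⟩
  exact ⟨(π i).2, by rw [evalFrom_jointTrace_succ, hπ i]⟩

theorem agent_winning_iff_game_winning_general (G : DFA (Set (Y ⊕ X)) S) :
    (∃ σ : List (Set X) → Set Y, ∀ π, PlayConsistent σ π → ∃ k, jointTrace π k ∈ G.accepts) ↔
      ∃ κ : S → Set Y, GameWinning G κ := by
  constructor
  · rintro ⟨σ, hσ⟩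
    refine exists_gameWinning_of_start_mem_attractor ?_
    by_contra hstart
    obtain ⟨π, hπ, rejected⟩ := exists_playConsistent_forall_notMem_accept hstart σ
    obtain ⟨k, accepted⟩ := hσ π hπ
    exact rejected k accepted
  · rintro ⟨κ, hκ⟩
    exact ⟨inducedStrategy G κ, fun π hπ => hκ π hπ.gameConsistent⟩

end DFAGame

/-- If the DFA A (finitely many states, over the alphabet 2^(Y∪X) with
Y, X finite) accepts exactly the finite, possibly empty, traces satisfying φ, then there
is an agent strategy winning for φ iff there is a game strategy winning in the DFA
game A. -/
theorem agent_winning_iff_game_winning {Y X S : Type}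
    [Fintype Y] [Fintype X] [Fintype S]
    (φ : LTLf (Y ⊕ X)) (A : DFA (Set (Y ⊕ X)) S)
    (hA : ∀ τ : List (Set (Y ⊕ X)), τ ∈ A.accepts ↔ LTLf.Sat τ φ) :
    (∃ σ : List (Set X) → Set Y, WinningFor σ φ) ↔ (∃ κ : S → Set Y, GameWinning A κ) := by
  simpa only [WinningFor, ← hA] using agent_winning_iff_game_winning_general A
end

section
/- Fix disjoint sets Y (agent atoms) and X (environment atoms). Let φ_org, φ_1, φ_2 be LTLf formulas over atoms Y ∪ X and let h_1, h_2 be histories. For every agent strategy σ: every σ-consistent play τ has a finite, possibly empty prefix ρ such that (h_1·h_2)·ρ satisfies φ_org, h_2·ρ satisfies φ_1, and ρ satisfies φ_2, if and only if σ is winning for the LTLf formula prog(φ_org, h_1·h_2) ∧ prog(φ_1, h_2) ∧ φ_2. -/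
/-!
Progression shifts a formula by one instant: `τ ⊨ prog(φ, w)` iff `w·τ ⊨ φ`. For `φ U ψ` and `φ R ψ`
this comes from the expansion laws, which unfold both operators by one instant through `X` and `W`;
the conjunct `tt U tt` and the disjunct `ff R ff` in the progression of `X` and `W` record whether
the rest of the trace is nonempty. Iterating over a history `h`, `ρ ⊨ prog(φ, h)` iff `h·ρ ⊨ φ`, so
on every play the same prefixes witness both sides of the equivalence.
-/

namespace LTLf

variable {P : Type} (φ ψ : LTLf P) (w : Set P) (h τ : List (Set P))

theorem sat_conj_iff : Sat τ (conj φ ψ) ↔ Sat τ φ ∧ Sat τ ψ := by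
  simp only [Sat]

theorem sat_disj_iff : Sat τ (disj φ ψ) ↔ Sat τ φ ∨ Sat τ ψ := by
  simp only [Sat]

theorem sat_untl_tt_tt_iff : Sat τ (untl tt tt) ↔ τ ≠ [] := by
  cases τ <;> simp [Sat]

theorem sat_release_ff_ff_iff : Sat τ (release ff ff) ↔ τ = [] := by
  cases τ <;> simp [Sat]

theorem sat_cons_untl_iff :
    Sat (w :: τ) (untl φ ψ) ↔
      Sat (w :: τ) ψ ∨ Sat (w :: τ) φ ∧ Sat (w :: τ) (next (untl φ ψ)) := by
  cases τ <;> simp [Sat]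

theorem sat_cons_release_iff :
    Sat (w :: τ) (release φ ψ) ↔
      Sat (w :: τ) ψ ∧ (Sat (w :: τ) φ ∨ Sat (w :: τ) (wnext (release φ ψ))) := by
  cases τ <;> simp [Sat]

theorem sat_prog_next_iff : Sat τ ((next φ).prog w) ↔ Sat (w :: τ) (next φ) := by
  simp only [prog, Sat, sat_untl_tt_tt_iff, and_comm]

theorem sat_prog_wnext_iff : Sat τ ((wnext φ).prog w) ↔ Sat (w :: τ) (wnext φ) := by
  simp only [prog, Sat, sat_release_ff_ff_iff, or_comm]

theorem prog_untl :
    (untl φ ψ).prog w = disj (ψ.prog w) (conj (φ.prog w) ((next (untl φ ψ)).prog w)) :=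
  rfl

theorem prog_release :
    (release φ ψ).prog w = conj (ψ.prog w) (disj (φ.prog w) ((wnext (release φ ψ)).prog w)) :=
  rfl

theorem sat_prog_iff : Sat τ (φ.prog w) ↔ Sat (w :: τ) φ := by
  induction φ with
  | tt | ff => simp only [prog, Sat]
  | atom p | natom p => by_cases hp : p ∈ w <;> simp [prog, Sat, hp]
  | conj φ ψ ihφ ihψ => simp only [prog, sat_conj_iff, ihφ, ihψ]
  | disj φ ψ ihφ ihψ => simp only [prog, sat_disj_iff, ihφ, ihψ]
  | next φ => exact sat_prog_next_iff φ w τ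
  | wnext φ => exact sat_prog_wnext_iff φ w τ
  | untl φ ψ ihφ ihψ =>
    rw [prog_untl, sat_disj_iff, sat_conj_iff, ihφ, ihψ, sat_prog_next_iff, sat_cons_untl_iff]
  | release φ ψ ihφ ihψ =>
    rw [prog_release, sat_conj_iff, sat_disj_iff, ihφ, ihψ, sat_prog_wnext_iff,
      sat_cons_release_iff]

theorem sat_progTrace_iff : Sat τ (φ.progTrace h) ↔ Sat (h ++ τ) φ := by
  induction h generalizing φ with
  | nil => rfl
  | cons w h ih =>
    calc Sat τ (φ.progTrace (w :: h))
      _ ↔ Sat (h ++ τ) (φ.prog w) := ih (φ.prog w)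
      _ ↔ Sat (w :: h ++ τ) φ := sat_prog_iff φ w (h ++ τ)

end LTLf

/-- Every σ-consistent play has a finite, possibly empty, prefix ρ with
(h₁·h₂)·ρ ⊨ φ_org, h₂·ρ ⊨ φ₁ and ρ ⊨ φ₂, iff σ is winning for the LTLf formula
prog(φ_org, h₁·h₂) ∧ prog(φ₁, h₂) ∧ φ₂. -/
theorem incremental_two_goals_iff_winning_prog {Y X : Type}
    (φorg φ₁ φ₂ : LTLf (Y ⊕ X)) (h₁ h₂ : List (Set Y × Set X))
    (σ : List (Set X) → Set Y) :
    (∀ π : ℕ → Set Y × Set X, PlayConsistent σ π →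
        ∃ k : ℕ, LTLf.Sat (histTrace (h₁ ++ h₂) ++ jointTrace π k) φorg ∧
          LTLf.Sat (histTrace h₂ ++ jointTrace π k) φ₁ ∧
          LTLf.Sat (jointTrace π k) φ₂) ↔
      WinningFor σ (LTLf.conj (φorg.progTrace (histTrace (h₁ ++ h₂)))
        (LTLf.conj (φ₁.progTrace (histTrace h₂)) φ₂)) := by
  simp only [WinningFor, LTLf.sat_conj_iff, LTLf.sat_progTrace_iff]
end
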